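/- (Corollary 1) Suppose eTRS satisfies the Slater condition and (t*, λ*) with λ* ≥ 0 maximizes k(t,λ) := (Δ+1)λmin(D(t,λ)) − t − λc over t ∈ ℝ, λ ≥ 0. Then strong duality fails for eTRS (p* ≠ d*) if and only if the following all hold: (1) λmin(D(t*,λ*)) = λmin(A) < 0 and λ* > 0; (2) λmin(A) is a simple eigenvalue of A, and the linear system (A − λmin(A)·I)x = a − (λ*/2)b has two solutions x1 and x2 satisfying ‖x1‖² = Δ, ‖x2‖² = Δ, and (bᵀx1 − c)(bᵀx2 − c) < 0. -/

import Mathlib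

open Matrix

/-- The smallest eigenvalue of a real (symmetric) matrix. -/
noncomputable def lambdaMin {ι : Type} [Fintype ι] (M : Matrix ι ι ℝ) : ℝ :=
  sInf {μ : ℝ | ∃ v : ι → ℝ, v ≠ 0 ∧ M.mulVec v = μ • v}

/-- The multiplicity of the smallest eigenvalue: the dimension of Null(M - λmin(M)·I). -/
noncomputable def eigMult {ι : Type} [Fintype ι] [DecidableEq ι] (M : Matrix ι ι ℝ) : ℕ :=
  Module.finrank ℝ (LinearMap.ker (M - lambdaMin M • (1 : Matrix ι ι ℝ)).mulVecLin)

/-- The bordered matrix D(t) = [[t, -aᵀ],[-a, A]]. -/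
noncomputable def borderD {n : ℕ} (A : Matrix (Fin n) (Fin n) ℝ) (a : Fin n → ℝ) (t : ℝ) :
    Matrix (Unit ⊕ Fin n) (Unit ⊕ Fin n) ℝ :=
  Matrix.fromBlocks (Matrix.of fun (_ : Unit) (_ : Unit) => t)
    (Matrix.of fun (_ : Unit) (j : Fin n) => -a j)
    (Matrix.of fun (i : Fin n) (_ : Unit) => -a i) A

/-- The bordered matrix D(t,λ) = [[t, (-a + (λ/2)b)ᵀ],[-a + (λ/2)b, A]]. -/
noncomputable def borderD2 {n : ℕ} (A : Matrix (Fin n) (Fin n) ℝ) (a b : Fin n → ℝ)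
    (t l : ℝ) : Matrix (Unit ⊕ Fin n) (Unit ⊕ Fin n) ℝ :=
  borderD A (fun j => a j - (l / 2) * b j) t

/-- The objective xᵀAx - 2aᵀx. -/
noncomputable def objQ {n : ℕ} (A : Matrix (Fin n) (Fin n) ℝ) (a : Fin n → ℝ)
    (x : Fin n → ℝ) : ℝ :=
  x ⬝ᵥ A.mulVec x - 2 * (a ⬝ᵥ x)

/-- The optimal value p* of eTRS. -/
noncomputable def pstar {n : ℕ} (A : Matrix (Fin n) (Fin n) ℝ) (a b : Fin n → ℝ)
    (c Δ : ℝ) : ℝ :=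
  sInf {v : ℝ | ∃ x : Fin n → ℝ, x ⬝ᵥ x ≤ Δ ∧ b ⬝ᵥ x ≤ c ∧ v = objQ A a x}

/-- The Lagrangian of eTRS. -/
noncomputable def lagr {n : ℕ} (A : Matrix (Fin n) (Fin n) ℝ) (a b : Fin n → ℝ)
    (c Δ : ℝ) (x : Fin n → ℝ) (l1 l2 : ℝ) : ℝ :=
  objQ A a x + l1 * (x ⬝ᵥ x - Δ) + l2 * (b ⬝ᵥ x - c)

/-- The Lagrangian dual value d* of eTRS:
the supremum over λ1, λ2 ≥ 0 of inf_x of the Lagrangian, encoded as the supremum of all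
values that are lower bounds of the Lagrangian for some admissible multipliers. -/
noncomputable def dstar {n : ℕ} (A : Matrix (Fin n) (Fin n) ℝ) (a b : Fin n → ℝ)
    (c Δ : ℝ) : ℝ :=
  sSup {v : ℝ | ∃ l1 l2 : ℝ, 0 ≤ l1 ∧ 0 ≤ l2 ∧ ∀ x : Fin n → ℝ, v ≤ lagr A a b c Δ x l1 l2}

/-- x is a global optimal solution of eTRS. -/
def isOptimal {n : ℕ} (A : Matrix (Fin n) (Fin n) ℝ) (a b : Fin n → ℝ)
    (c Δ : ℝ) (x : Fin n → ℝ) : Prop :=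
  x ⬝ᵥ x ≤ Δ ∧ b ⬝ᵥ x ≤ c ∧
    ∀ y : Fin n → ℝ, y ⬝ᵥ y ≤ Δ → b ⬝ᵥ y ≤ c → objQ A a x ≤ objQ A a y

/-- The dual objective k(t,λ) = (Δ+1)·λmin(D(t,λ)) - t - λc. -/
noncomputable def ktl {n : ℕ} (A : Matrix (Fin n) (Fin n) ℝ) (a b : Fin n → ℝ)
    (c Δ : ℝ) (t l : ℝ) : ℝ :=
  (Δ + 1) * lambdaMin (borderD2 A a b t l) - t - l * c

lemma eigset_finite {ι : Type} [Fintype ι] [DecidableEq ι] (M : Matrix ι ι ℝ) :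
    {μ : ℝ | ∃ v : ι → ℝ, v ≠ 0 ∧ M.mulVec v = μ • v}.Finite := by
  refine (Module.End.finite_hasEigenvalue (Matrix.toLin' M)).subset ?_
  rintro μ ⟨v, hv, h⟩
  exact Module.End.hasEigenvalue_of_hasEigenvector (x := v)
    ⟨Module.End.mem_eigenspace_iff.2 (by simpa using h), hv⟩

lemma eigset_nonempty {ι : Type} [Fintype ι] [DecidableEq ι] [Nonempty ι] (M : Matrix ι ι ℝ)
    (hM : M.IsHermitian) : {μ : ℝ | ∃ v : ι → ℝ, v ≠ 0 ∧ M.mulVec v = μ • v}.Nonempty := by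
  obtain ⟨j⟩ := ‹Nonempty ι›
  refine ⟨hM.eigenvalues j, WithLp.ofLp (hM.eigenvectorBasis j), ?_, hM.mulVec_eigenvectorBasis j⟩
  intro h
  have := hM.eigenvectorBasis.orthonormal.ne_zero j
  exact this (by ext i; exact congrFun h i)

lemma lambdaMin_eig {ι : Type} [Fintype ι] [DecidableEq ι] [Nonempty ι] (M : Matrix ι ι ℝ)
    (hM : M.IsHermitian) : ∃ v : ι → ℝ, v ≠ 0 ∧ M.mulVec v = lambdaMin M • v :=
  (eigset_nonempty M hM).csInf_mem (eigset_finite M)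

lemma lambdaMin_le {ι : Type} [Fintype ι] [DecidableEq ι] (M : Matrix ι ι ℝ)
    (hM : M.IsHermitian) (x : ι → ℝ) : lambdaMin M * (x ⬝ᵥ x) ≤ x ⬝ᵥ M.mulVec x := by
  have hN : (M - lambdaMin M • (1 : Matrix ι ι ℝ)).IsHermitian :=
    hM.sub (by simp [Matrix.IsHermitian])
  have hps : (M - lambdaMin M • (1 : Matrix ι ι ℝ)).PosSemidef := by
    rw [hN.posSemidef_iff_eigenvalues_nonneg]
    intro i
    have h1 := hN.mulVec_eigenvectorBasis i
    have h0 : WithLp.ofLp (hN.eigenvectorBasis i) ≠ 0 := by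
      intro h
      have := hN.eigenvectorBasis.orthonormal.ne_zero i
      exact this (by ext i; exact congrFun h i)
    have : lambdaMin M ≤ hN.eigenvalues i + lambdaMin M := by
      apply csInf_le (eigset_finite M).bddBelow
      refine ⟨_, h0, ?_⟩
      rw [Matrix.sub_mulVec, Matrix.smul_mulVec, Matrix.one_mulVec] at h1
      rw [add_smul, ← h1]; abel
    show (0:ℝ) ≤ _
    linarith
  have := hps.dotProduct_mulVec_nonneg x
  simp only [star_trivial, Matrix.sub_mulVec, Matrix.smul_mulVec, Matrix.one_mulVec,
    dotProduct_sub, dotProduct_smul, smul_eq_mul] at this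
  linarith

lemma dot_pos {ι : Type} [Fintype ι] {x : ι → ℝ} (hx : x ≠ 0) : 0 < x ⬝ᵥ x := by
  have := Matrix.dotProduct_star_self_pos_iff (v := x)
  simpa using this.2 hx

lemma dot_nonneg {ι : Type} [Fintype ι] (x : ι → ℝ) : 0 ≤ x ⬝ᵥ x := by
  have := dotProduct_star_self_nonneg x
  simpa using this

lemma borderD2_herm {n : ℕ} (A : Matrix (Fin n) (Fin n) ℝ) (hA : A.IsHermitian)
    (a b : Fin n → ℝ) (t l : ℝ) : (borderD2 A a b t l).IsHermitian := by
  unfold borderD2 borderD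
  refine Matrix.IsHermitian.fromBlocks ?_ ?_ hA
  · ext i j; simp
  · ext i j; simp

lemma border_quad {n : ℕ} (A : Matrix (Fin n) (Fin n) ℝ)
    (a b : Fin n → ℝ) (t l τ : ℝ) (x : Fin n → ℝ) :
    (Sum.elim (fun _ => τ) x) ⬝ᵥ (borderD2 A a b t l).mulVec (Sum.elim (fun _ => τ) x)
      = t * τ ^ 2 - 2 * τ * (a ⬝ᵥ x) + l * τ * (b ⬝ᵥ x) + x ⬝ᵥ A.mulVec x := by
  unfold borderD2 borderD
  rw [Matrix.fromBlocks_mulVec, sumElim_dotProduct_sumElim, dotProduct_add x]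
  have e1 : (Matrix.of fun (_ : Unit) (j : Fin n) => -(a j - l / 2 * b j)).mulVec x
      = fun _ => -(a ⬝ᵥ x) + l / 2 * (b ⬝ᵥ x) := by
    ext i
    simp only [Matrix.mulVec, dotProduct, Matrix.of_apply, Finset.mul_sum, ← Finset.sum_neg_distrib,
      ← Finset.sum_add_distrib]
    refine Finset.sum_congr rfl fun j _ => by ring
  have e2 : x ⬝ᵥ (Matrix.of fun (i : Fin n) (_ : Unit) => -(a i - l / 2 * b i)).mulVec
      (fun _ => τ) = τ * (-(a ⬝ᵥ x) + l / 2 * (b ⬝ᵥ x)) := by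
    simp only [Matrix.mulVec, dotProduct, Matrix.of_apply, Finset.mul_sum, ← Finset.sum_neg_distrib,
      ← Finset.sum_add_distrib, Finset.univ_unique, Finset.sum_singleton]
    refine Finset.sum_congr rfl fun j _ => by ring
  have e3 : (fun _ : Unit => τ) ⬝ᵥ ((Matrix.of fun (_ : Unit) (_ : Unit) => t).mulVec
      (fun _ => τ) + fun _ => -(a ⬝ᵥ x) + l / 2 * (b ⬝ᵥ x))
      = τ * (t * τ + (-(a ⬝ᵥ x) + l / 2 * (b ⬝ᵥ x))) := by
    simp [Matrix.mulVec, dotProduct]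
  have c1 : (Sum.elim (fun _ : Unit => τ) x) ∘ Sum.inl = fun _ => τ := rfl
  have c2 : (Sum.elim (fun _ : Unit => τ) x) ∘ Sum.inr = x := rfl
  rw [c1, c2]
  beta_reduce
  rw [e1, e2, e3]
  ring

lemma border_norm {n : ℕ} (τ : ℝ) (x : Fin n → ℝ) :
    (Sum.elim (fun _ : Unit => τ) x) ⬝ᵥ (Sum.elim (fun _ : Unit => τ) x) = τ ^ 2 + x ⬝ᵥ x := by
  rw [sumElim_dotProduct_sumElim]; simp [dotProduct, sq]

lemma mu_le_m {n : ℕ} [Nonempty (Fin n)] (A : Matrix (Fin n) (Fin n) ℝ) (hA : A.IsHermitian)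
    (a b : Fin n → ℝ) (t l : ℝ) : lambdaMin (borderD2 A a b t l) ≤ lambdaMin A := by
  obtain ⟨u, hu, hAu⟩ := lambdaMin_eig A hA
  have h := lambdaMin_le _ (borderD2_herm A hA a b t l) (Sum.elim (fun _ => (0:ℝ)) u)
  rw [border_quad, border_norm, hAu] at h
  simp only [dotProduct_smul, smul_eq_mul] at h
  have := dot_pos hu
  by_contra hc
  nlinarith

lemma k_le_lagr {n : ℕ} (A : Matrix (Fin n) (Fin n) ℝ) (hA : A.IsHermitian)
    (a b : Fin n → ℝ) (c Δ t l : ℝ) (x : Fin n → ℝ) :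
    ktl A a b c Δ t l ≤ lagr A a b c Δ x (-lambdaMin (borderD2 A a b t l)) l := by
  have h := lambdaMin_le _ (borderD2_herm A hA a b t l) (Sum.elim (fun _ => (1:ℝ)) x)
  rw [border_quad, border_norm] at h
  unfold ktl lagr objQ
  linarith

lemma psd_of_bdd {n : ℕ} (A : Matrix (Fin n) (Fin n) ℝ)
    (a b : Fin n → ℝ) (c Δ l1 l2 v : ℝ) (h : ∀ x, v ≤ lagr A a b c Δ x l1 l2) (x : Fin n → ℝ) :
    0 ≤ x ⬝ᵥ A.mulVec x + l1 * (x ⬝ᵥ x) := by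
  by_contra hc
  push Not at hc
  set p := x ⬝ᵥ A.mulVec x + l1 * (x ⬝ᵥ x) with hp
  set q := -2 * (a ⬝ᵥ x) + l2 * (b ⬝ᵥ x) with hq
  set r := -l1 * Δ - l2 * c - v with hr
  have key : ∀ s : ℝ, 0 ≤ p * (s * s) + q * s + r := by
    intro s
    have := h (s • x)
    unfold lagr objQ at this
    simp only [Matrix.mulVec_smul, dotProduct_smul, smul_dotProduct, smul_eq_mul] at this
    rw [hp, hq, hr]
    linarith
  have hpne : p ≠ 0 := hc.ne
  have k1 := key ((|q| + |r| + 1) / (-p) + 1)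
  set s := (|q| + |r| + 1) / (-p) + 1 with hs
  have hs1 : 1 ≤ s := by
    have : 0 ≤ (|q| + |r| + 1) / (-p) := div_nonneg (by positivity) (by linarith)
    linarith
  have hs2 : p * s = -(|q| + |r| + 1) + p := by
    rw [hs]; field_simp
  have hq' := le_abs_self q
  have hr' := le_abs_self r
  have hrn := abs_nonneg r
  nlinarith

lemma v_le_k {n : ℕ} (A : Matrix (Fin n) (Fin n) ℝ) (hA : A.IsHermitian)
    (a b : Fin n → ℝ) (c Δ l1 l2 v : ℝ) (hΔ : 0 < Δ)
    (h : ∀ x, v ≤ lagr A a b c Δ x l1 l2) :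
    v ≤ ktl A a b c Δ (-l1 * Δ - l2 * c - v - l1) l2 := by
  have hps := psd_of_bdd A a b c Δ l1 l2 v h
  set t := -l1 * Δ - l2 * c - v - l1 with ht
  have hmu : -l1 ≤ lambdaMin (borderD2 A a b t l2) := by
    obtain ⟨w, hw, hDw⟩ := lambdaMin_eig _ (borderD2_herm A hA a b t l2)
    have hw2 : w = Sum.elim (fun _ => w (Sum.inl ())) (fun i => w (Sum.inr i)) := by
      ext i; rcases i with i | i <;> rfl
    have hq := border_quad A a b t l2 (w (Sum.inl ())) (fun i => w (Sum.inr i))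
    have hnn := border_norm (w (Sum.inl ())) (fun i => w (Sum.inr i))
    rw [← hw2] at hq hnn
    rw [hDw, dotProduct_smul, smul_eq_mul] at hq
    have hpos := dot_pos hw
    set τ := w (Sum.inl ())
    set x : Fin n → ℝ := fun i => w (Sum.inr i)
    have hmain : -l1 * (w ⬝ᵥ w) ≤ lambdaMin (borderD2 A a b t l2) * (w ⬝ᵥ w) := by
      rw [hq, hnn]
      by_cases hτ : τ = 0
      · rw [hτ]; have := hps x; nlinarith
      · have := h (τ⁻¹ • x)
        unfold lagr objQ at this
        simp only [Matrix.mulVec_smul, dotProduct_smul, smul_dotProduct, smul_eq_mul] at this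
        have h2 := mul_le_mul_of_nonneg_left this (sq_nonneg τ)
        have e : τ ^ 2 * (τ⁻¹ * (τ⁻¹ * x ⬝ᵥ A.mulVec x) - 2 * (τ⁻¹ * a ⬝ᵥ x) +
            l1 * (τ⁻¹ * (τ⁻¹ * x ⬝ᵥ x) - Δ) + l2 * (τ⁻¹ * b ⬝ᵥ x - c))
            = x ⬝ᵥ A.mulVec x - 2 * τ * (a ⬝ᵥ x) + l1 * (x ⬝ᵥ x - Δ * τ ^ 2)
              + l2 * (τ * (b ⬝ᵥ x) - c * τ ^ 2) := by
          field_simp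
        rw [e] at h2
        rw [ht]
        nlinarith
    exact le_of_mul_le_mul_right hmain hpos
  unfold ktl
  have : (Δ + 1) * (-l1) ≤ (Δ + 1) * lambdaMin (borderD2 A a b t l2) :=
    mul_le_mul_of_nonneg_left hmu (by linarith)
  linarith

lemma convex_duality {V : Type*} [AddCommGroup V] [Module ℝ V] (f g h : V → ℝ)
    (hf : ConvexOn ℝ Set.univ f) (hg : ConvexOn ℝ Set.univ g) (hh : ConvexOn ℝ Set.univ h)
    (x0 : V) (hg0 : g x0 < 0) (hh0 : h x0 < 0) (fs : ℝ)
    (hfs : ∀ x, g x ≤ 0 → h x ≤ 0 → fs ≤ f x) :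
    ∃ l1 l2 : ℝ, 0 ≤ l1 ∧ 0 ≤ l2 ∧ ∀ x, fs ≤ f x + l1 * g x + l2 * h x := by
  let S : Set (ℝ × ℝ × ℝ) := {p | ∃ x, f x - fs < p.1 ∧ g x < p.2.1 ∧ h x < p.2.2}
  have hSo : IsOpen S := by
    have : S = ⋃ x, Set.Ioi (f x - fs) ×ˢ (Set.Ioi (g x) ×ˢ Set.Ioi (h x)) := by
      ext p; simp [S]
    rw [this]
    exact isOpen_iUnion fun x => isOpen_Ioi.prod (isOpen_Ioi.prod isOpen_Ioi)
  have hSc : Convex ℝ S := by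
    rintro ⟨p1, p2, p3⟩ ⟨x, h1, h2, h3⟩ ⟨q1, q2, q3⟩ ⟨y, k1, k2, k3⟩ α β hα hβ hab
    have F := hf.2 (Set.mem_univ x) (Set.mem_univ y) hα hβ hab
    have G := hg.2 (Set.mem_univ x) (Set.mem_univ y) hα hβ hab
    have H := hh.2 (Set.mem_univ x) (Set.mem_univ y) hα hβ hab
    simp only [smul_eq_mul] at F G H h1 h2 h3 k1 k2 k3
    have mix : ∀ u v u' v' : ℝ, u < u' → v < v' → α * u + β * v < α * u' + β * v' := by
      intro u v u' v' hu hv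
      rcases hα.lt_or_eq with h0 | h0
      · have := mul_lt_mul_of_pos_left hu h0
        have := mul_le_mul_of_nonneg_left hv.le hβ
        linarith
      · have hb1 : β = 1 := by linarith
        rw [← h0, hb1]; linarith
    refine ⟨α • x + β • y, ?_, ?_, ?_⟩
    · have := mix _ _ _ _ h1 k1
      have e : α * (f x - fs) + β * (f y - fs) = α * f x + β * f y - fs := by
        linear_combination (-fs) * hab
      simp only [Prod.smul_mk, Prod.mk_add_mk, smul_eq_mul]
      linarith
    · have := mix _ _ _ _ h2 k2
      simp only [Prod.smul_mk, Prod.mk_add_mk, smul_eq_mul]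
      linarith
    · have := mix _ _ _ _ h3 k3
      simp only [Prod.smul_mk, Prod.mk_add_mk, smul_eq_mul]
      linarith
  have h0 : (0 : ℝ × ℝ × ℝ) ∉ S := by
    rintro ⟨x, h1, h2, h3⟩
    have := hfs x h2.le h3.le
    simp only [Prod.fst_zero] at h1
    linarith
  obtain ⟨φ, hφ⟩ := geometric_hahn_banach_open_point hSc hSo h0
  set α := -φ (1, 0, 0) with hα
  set β := -φ (0, 1, 0) with hβ
  set γ := -φ (0, 0, 1) with hγ
  have hrep : ∀ r s t : ℝ, φ (r, s, t) = -(α * r + β * s + γ * t) := by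
    intro r s t
    have : ((r, s, t) : ℝ × ℝ × ℝ) = r • (1, 0, 0) + s • (0, 1, 0) + t • (0, 0, 1) := by
      simp
    rw [this, map_add, map_add, map_smul, map_smul, map_smul, hα, hβ, hγ]
    simp only [smul_eq_mul]; ring
  have hpos : ∀ x r s t, f x - fs < r → g x < s → h x < t → 0 < α * r + β * s + γ * t := by
    intro x r s t h1 h2 h3
    have := hφ (r, s, t) ⟨x, h1, h2, h3⟩
    rw [hrep, map_zero] at this
    linarith
  have lin : ∀ κ C : ℝ, (∀ N : ℝ, 0 ≤ N → 0 < κ * N + C) → 0 ≤ κ := by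
    intro κ C hN
    by_contra hc
    push Not at hc
    have hκ : κ ≠ 0 := hc.ne
    have := le_abs_self C
    have := hN ((|C|+1) / (-κ)) (div_nonneg (by positivity) (by linarith))
    have e : κ * ((|C|+1) / (-κ)) = -(|C|+1) := by field_simp
    linarith
  have hα0 : 0 ≤ α := lin α (α * (f x0 - fs + 1) + β * 0 + γ * 0) fun N hN => by
    have := hpos x0 (f x0 - fs + 1 + N) 0 0 (by linarith) hg0 hh0
    linarith
  have hβ0 : 0 ≤ β := lin β (α * (f x0 - fs + 1) + β * 0 + γ * 0) fun N hN => by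
    have := hpos x0 (f x0 - fs + 1) N 0 (by linarith) (by linarith) hh0
    linarith
  have hγ0 : 0 ≤ γ := lin γ (α * (f x0 - fs + 1) + β * 0 + γ * 0) fun N hN => by
    have := hpos x0 (f x0 - fs + 1) 0 N (by linarith) hg0 (by linarith)
    linarith
  have hcl : ∀ x, 0 ≤ α * (f x - fs) + β * g x + γ * h x := by
    intro x
    by_contra hc
    push Not at hc
    set C := α * (f x - fs) + β * g x + γ * h x with hC
    have hd : 0 < α + β + γ + 1 := by linarith
    set e := -C / (α + β + γ + 1) with he
    have hep : 0 < e := div_pos (by linarith) hd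
    have := hpos x (f x - fs + e) (g x + e) (h x + e) (by linarith) (by linarith) (by linarith)
    have h2 : (α + β + γ + 1) * e = -C := by rw [he]; field_simp
    nlinarith
  have hαp : 0 < α := by
    rcases hα0.lt_or_eq with h1 | h1
    · exact h1
    exfalso
    have h2 := hcl x0
    rw [← h1] at h2
    have hb : β = 0 := by nlinarith [mul_nonneg hγ0 (neg_nonneg.2 hh0.le)]
    have hc : γ = 0 := by nlinarith
    have := hpos x0 (f x0 - fs + 1) 0 0 (by linarith) hg0 hh0
    rw [← h1, hb, hc] at this
    simp at this
  refine ⟨β / α, γ / α, div_nonneg hβ0 hα0, div_nonneg hγ0 hα0, fun x => ?_⟩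
  have h1 := div_nonneg (hcl x) hα0
  have e : (α * (f x - fs) + β * g x + γ * h x) / α
      = f x - fs + β / α * g x + γ / α * h x := by field_simp
  rw [e] at h1
  linarith

lemma quad_convex {n : ℕ} (Q : Matrix (Fin n) (Fin n) ℝ) (hQ : ∀ x, 0 ≤ x ⬝ᵥ Q.mulVec x)
    (a : Fin n → ℝ) (r : ℝ) :
    ConvexOn ℝ Set.univ (fun x => x ⬝ᵥ Q.mulVec x + a ⬝ᵥ x + r) := by
  refine ⟨convex_univ, ?_⟩
  intro x _ y _ α β hα hβ hab
  have h := mul_nonneg (mul_nonneg hα hβ) (hQ (x - y))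
  obtain rfl : β = 1 - α := by linarith
  simp only [Matrix.mulVec_add, Matrix.mulVec_sub, Matrix.mulVec_smul, dotProduct_add,
    add_dotProduct, dotProduct_sub, sub_dotProduct, dotProduct_smul, smul_dotProduct,
    smul_eq_mul] at h ⊢
  nlinarith

lemma quad_min {n : ℕ} (Q : Matrix (Fin n) (Fin n) ℝ) (hQh : Q.IsHermitian)
    (hQ : ∀ x, 0 ≤ x ⬝ᵥ Q.mulVec x) (w y : Fin n → ℝ)
    (h : ∀ z, y ⬝ᵥ Q.mulVec y - 2 * (w ⬝ᵥ y) ≤ z ⬝ᵥ Q.mulVec z - 2 * (w ⬝ᵥ z)) :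
    Q.mulVec y = w := by
  have hsym : ∀ u v : Fin n → ℝ, u ⬝ᵥ Q.mulVec v = v ⬝ᵥ Q.mulVec u := by
    intro u v
    have hT : Qᵀ = Q := by
      simpa [Matrix.conjTranspose_eq_transpose_of_trivial] using hQh.eq
    rw [Matrix.dotProduct_mulVec, ← Matrix.mulVec_transpose, hT, dotProduct_comm]
  set r := Q.mulVec y - w with hr
  have hk : ∀ s : ℝ, 0 ≤ s ^ 2 * (r ⬝ᵥ Q.mulVec r) - 2 * s * (r ⬝ᵥ r) := by
    intro s
    have := h (y - s • r)
    have e : r ⬝ᵥ r = r ⬝ᵥ Q.mulVec y - w ⬝ᵥ r := by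
      conv_lhs => rw [hr, sub_dotProduct, ← hr]
      rw [dotProduct_comm]
    have e2 := hsym y r
    simp only [Matrix.mulVec_sub, Matrix.mulVec_smul, dotProduct_sub, sub_dotProduct,
      dotProduct_smul, smul_dotProduct, smul_eq_mul] at this
    rw [e]
    rw [e2] at this
    linarith
  have hrr : r ⬝ᵥ r = 0 := by
    have hp := hQ r
    set p := r ⬝ᵥ Q.mulVec r
    set q := r ⬝ᵥ r
    have h1 := hk (q / (p + 1))
    have hp1 : 0 < p + 1 := by linarith
    have e : (q / (p + 1)) ^ 2 * p - 2 * (q / (p + 1)) * q = q ^ 2 * (-p - 2) / (p + 1) ^ 2 := by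
      field_simp; ring
    rw [e] at h1
    have h2 : 0 ≤ q ^ 2 * (-p - 2) := by
      by_contra hc
      push Not at hc
      have := div_neg_of_neg_of_pos hc (by positivity : 0 < (p + 1) ^ 2)
      linarith
    have : q ^ 2 = 0 := by nlinarith [sq_nonneg q]
    exact pow_eq_zero_iff (two_ne_zero) |>.1 this
  have : r = 0 := by
    by_contra hne
    exact (dot_pos hne).ne' hrr
  rw [hr] at this
  exact sub_eq_zero.1 this

lemma reach_sphere {n : ℕ} (y u : Fin n → ℝ) (hu : u ≠ 0) (Δ : ℝ) (hy : y ⬝ᵥ y < Δ) :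
    ∃ s : ℝ, 0 < s ∧ (y + s • u) ⬝ᵥ (y + s • u) = Δ := by
  have hup := dot_pos hu
  set p := u ⬝ᵥ u
  set q := y ⬝ᵥ u with hq
  have hexp : ∀ s : ℝ, (y + s • u) ⬝ᵥ (y + s • u) = p * s ^ 2 + 2 * q * s + y ⬝ᵥ y := by
    intro s
    simp only [dotProduct_add, add_dotProduct, dotProduct_smul, smul_dotProduct, smul_eq_mul]
    rw [dotProduct_comm u y]; ring
  set d := q ^ 2 + p * (Δ - y ⬝ᵥ y) with hd
  have hd1 : q ^ 2 < d := by
    have := mul_pos hup (sub_pos.2 hy); linarith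
  have hd0 : 0 ≤ d := (sq_nonneg q).trans hd1.le
  have hs : |q| < √d := by
    rw [← Real.sqrt_sq_eq_abs]; exact Real.sqrt_lt_sqrt (sq_nonneg q) hd1
  refine ⟨(-q + √d) / p, div_pos (by have := le_abs_self q; linarith) hup, ?_⟩
  rw [hexp]
  have e : p * ((-q + √d) / p) ^ 2 + 2 * q * ((-q + √d) / p) = (√d ^ 2 - q ^ 2) / p := by
    field_simp; ring
  rw [e, Real.sq_sqrt hd0, hd]
  field_simp; ring

set_option maxHeartbeats 1000000 in
theorem stmt13 {n : ℕ} (hn : 1 ≤ n) (A : Matrix (Fin n) (Fin n) ℝ) (hA : A.IsHermitian)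
    (hnpd : ¬ A.PosDef) (a b : Fin n → ℝ) (c Δ : ℝ) (hΔ : 0 < Δ)
    (hslater : ∃ x : Fin n → ℝ, x ⬝ᵥ x < Δ ∧ b ⬝ᵥ x < c)
    (ts ls : ℝ) (hls : 0 ≤ ls)
    (hmax : ∀ t l : ℝ, 0 ≤ l → ktl A a b c Δ t l ≤ ktl A a b c Δ ts ls) :
    pstar A a b c Δ ≠ dstar A a b c Δ ↔
      (lambdaMin (borderD2 A a b ts ls) = lambdaMin A ∧ lambdaMin A < 0 ∧ 0 < ls) ∧
      (eigMult A = 1 ∧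
        ∃ x1 x2 : Fin n → ℝ,
          (A - lambdaMin A • (1 : Matrix (Fin n) (Fin n) ℝ)).mulVec x1 = a - (ls / 2) • b ∧
          (A - lambdaMin A • (1 : Matrix (Fin n) (Fin n) ℝ)).mulVec x2 = a - (ls / 2) • b ∧
          x1 ⬝ᵥ x1 = Δ ∧ x2 ⬝ᵥ x2 = Δ ∧ (b ⬝ᵥ x1 - c) * (b ⬝ᵥ x2 - c) < 0) := by
  have : Nonempty (Fin n) := ⟨⟨0, hn⟩⟩
  obtain ⟨xs, hxs1, hxs2⟩ := hslater
  set m := lambdaMin A with hm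
  set μ := lambdaMin (borderD2 A a b ts ls) with hμ
  set v := ktl A a b c Δ ts ls with hv
  have hμm : μ ≤ m := mu_le_m A hA a b ts ls
  have hray : ∀ x, m * (x ⬝ᵥ x) ≤ x ⬝ᵥ A.mulVec x := lambdaMin_le A hA
  have hm0 : m ≤ 0 := by
    by_contra hc
    push Not at hc
    apply hnpd
    refine Matrix.PosDef.of_dotProduct_mulVec_pos hA fun x hx => ?_
    have := mul_pos hc (dot_pos hx)
    simpa using this.trans_le (hray x)
  have hL : ∀ x, v ≤ lagr A a b c Δ x (-μ) ls := k_le_lagr A hA a b c Δ ts ls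
  -- the dual value
  have hd : dstar A a b c Δ = v := by
    refine IsGreatest.csSup_eq ⟨⟨-μ, ls, by linarith, hls, hL⟩, ?_⟩
    rintro w ⟨l1, l2, _, h2, hw⟩
    exact (v_le_k A hA a b c Δ l1 l2 w hΔ hw).trans (hmax _ _ h2)
  -- the primal value
  have hcont : Continuous fun x : Fin n → ℝ => objQ A a x := by
    unfold objQ; fun_prop
  have hcomp : IsCompact {x : Fin n → ℝ | x ⬝ᵥ x ≤ Δ ∧ b ⬝ᵥ x ≤ c} := by
    have hc1 : IsClosed {x : Fin n → ℝ | x ⬝ᵥ x ≤ Δ ∧ b ⬝ᵥ x ≤ c} := by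
      rw [Set.setOf_and]
      refine IsClosed.inter (isClosed_le ?_ continuous_const) (isClosed_le ?_ continuous_const)
      · fun_prop
      · fun_prop
    refine Metric.isCompact_of_isClosed_isBounded hc1 ?_
    refine (Metric.isBounded_closedBall (x := (0 : Fin n → ℝ)) (r := √Δ)).subset ?_
    rintro x ⟨hx, _⟩
    rw [mem_closedBall_zero_iff, pi_norm_le_iff_of_nonneg (Real.sqrt_nonneg _)]
    intro i
    rw [Real.norm_eq_abs]
    apply Real.abs_le_sqrt
    refine le_trans ?_ hx
    rw [sq]
    exact Finset.single_le_sum (f := fun i => x i * x i) (fun j _ => mul_self_nonneg _)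
      (Finset.mem_univ i)
  have hne : {x : Fin n → ℝ | x ⬝ᵥ x ≤ Δ ∧ b ⬝ᵥ x ≤ c}.Nonempty := ⟨xs, hxs1.le, hxs2.le⟩
  obtain ⟨xo, ⟨hxo1, hxo2⟩, hxo⟩ := hcomp.exists_isMinOn hne hcont.continuousOn
  have hp : pstar A a b c Δ = objQ A a xo := by
    refine IsLeast.csInf_eq ⟨⟨xo, hxo1, hxo2, rfl⟩, ?_⟩
    rintro w ⟨x, h1, h2, rfl⟩
    exact hxo ⟨h1, h2⟩
  rw [hp, hd]
  have hweak : ∀ x, x ⬝ᵥ x ≤ Δ → b ⬝ᵥ x ≤ c → v ≤ objQ A a x := by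
    intro x h1 h2
    have := hL x
    unfold lagr at this
    nlinarith [mul_nonneg (by linarith : 0 ≤ -μ) (sub_nonneg.2 h1),
      mul_nonneg hls (sub_nonneg.2 h2)]
  -- minimizers of the Lagrangian
  have hmin : ∀ y, lagr A a b c Δ y (-μ) ls ≤ v →
      (A - μ • (1 : Matrix (Fin n) (Fin n) ℝ)).mulVec y = a - (ls / 2) • b := by
    intro y hy
    refine quad_min _ ?_ ?_ _ _ ?_
    · exact hA.sub (by simp [Matrix.IsHermitian])
    · intro x
      have h1 := hray x
      have h2 := mul_le_mul_of_nonneg_right hμm (dot_nonneg x)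
      simp only [Matrix.sub_mulVec, Matrix.smul_mulVec, Matrix.one_mulVec,
        dotProduct_sub, dotProduct_smul, smul_eq_mul]
      linarith
    · intro z
      have h1 := hy.trans (hL z)
      unfold lagr objQ at h1
      simp only [Matrix.sub_mulVec, Matrix.smul_mulVec, Matrix.one_mulVec,
        dotProduct_sub, sub_dotProduct, dotProduct_smul, smul_dotProduct, smul_eq_mul]
      linarith
  constructor
  · intro hneq
    have hgap : v < objQ A a xo := lt_of_le_of_ne (hweak xo hxo1 hxo2) (Ne.symm hneq)
    have hgap' : ∀ x, x ⬝ᵥ x ≤ Δ → b ⬝ᵥ x ≤ c → v < objQ A a x := fun x h1 h2 =>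
      hgap.trans_le (hxo ⟨h1, h2⟩)
    -- the convexified problem
    let f : (Fin n → ℝ) → ℝ := fun x =>
      x ⬝ᵥ (A - m • (1 : Matrix (Fin n) (Fin n) ℝ)).mulVec x + ((-2 : ℝ) • a) ⬝ᵥ x + m * Δ
    have hf : ∀ x, f x = objQ A a x - m * (x ⬝ᵥ x - Δ) := by
      intro x
      simp only [f, objQ, Matrix.sub_mulVec, Matrix.smul_mulVec, Matrix.one_mulVec,
        dotProduct_sub, dotProduct_smul, smul_dotProduct, smul_eq_mul]
      ring
    have hfc : Continuous f := by
      simp only [f]; fun_prop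
    obtain ⟨y, ⟨hy1, hy2⟩, hy⟩ := hcomp.exists_isMinOn hne hfc.continuousOn
    have hfconv : ConvexOn ℝ Set.univ f := by
      refine quad_convex _ (fun x => ?_) _ _
      have h1 := hray x
      simp only [Matrix.sub_mulVec, Matrix.smul_mulVec, Matrix.one_mulVec,
        dotProduct_sub, dotProduct_smul, smul_eq_mul]
      linarith
    have hgconv : ConvexOn ℝ Set.univ (fun x : Fin n → ℝ => x ⬝ᵥ x - Δ) := by
      have := quad_convex (1 : Matrix (Fin n) (Fin n) ℝ)
        (fun x => by simpa using dot_nonneg x) 0 (-Δ)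
      simpa [sub_eq_add_neg] using this
    have hhconv : ConvexOn ℝ Set.univ (fun x : Fin n → ℝ => b ⬝ᵥ x - c) := by
      have := quad_convex (0 : Matrix (Fin n) (Fin n) ℝ)
        (fun x => by simp) b (-c)
      simpa [sub_eq_add_neg] using this
    obtain ⟨l1, l2, hl1, hl2, hdual⟩ := convex_duality f _ _ hfconv hgconv hhconv xs
      (by linarith) (by linarith) (f y)
      (fun x h1 h2 => hy ⟨by linarith, by linarith⟩)
    have hfy : f y ≤ v := by
      refine (v_le_k A hA a b c Δ (l1 - m) l2 (f y) hΔ fun x => ?_).trans (hmax _ _ hl2)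
      have := hdual x
      rw [hf x] at this
      unfold lagr
      linarith
    have hLy := hL y
    have hfy2 := hfy
    rw [hf y] at hfy2
    unfold lagr at hLy
    have s1 : 0 ≤ (m - μ) * (Δ - y ⬝ᵥ y) := mul_nonneg (by linarith) (by linarith)
    have s2 : 0 ≤ ls * (c - b ⬝ᵥ y) := mul_nonneg hls (by linarith)
    have s1' : (m - μ) * (Δ - y ⬝ᵥ y) = 0 := by linarith
    have s2' : ls * (c - b ⬝ᵥ y) = 0 := by linarith
    have hyv := hgap' y hy1 hy2
    have hmn : m ≠ 0 := by
      intro h; rw [h] at hfy2; linarith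
    have hmneg : m < 0 := lt_of_le_of_ne hm0 hmn
    have hyΔ : y ⬝ᵥ y < Δ := by
      refine lt_of_le_of_ne hy1 fun h => ?_
      rw [h] at hfy2; linarith
    have hμeq : μ = m := by
      rcases mul_eq_zero.1 s1' with h | h <;> linarith
    have hyX := hmin y (by unfold lagr; linarith)
    rw [hμeq] at hyX
    -- every point of the solution set on the sphere violates the linear constraint
    have hzX : ∀ z, (A - m • (1 : Matrix (Fin n) (Fin n) ℝ)).mulVec (z - y) = 0 →
        z ⬝ᵥ z = Δ → b ⬝ᵥ z ≤ c → ls * (b ⬝ᵥ z - c) = 0 → False := by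
      intro z hz hzΔ hzc hzs
      have hob := hgap' z hzΔ.le hzc
      have hT : Aᵀ = A := by
        simpa [Matrix.conjTranspose_eq_transpose_of_trivial] using hA.eq
      have hsym : ∀ u v : Fin n → ℝ, u ⬝ᵥ A.mulVec v = v ⬝ᵥ A.mulVec u := by
        intro u v
        rw [Matrix.dotProduct_mulVec, ← Matrix.mulVec_transpose, hT, dotProduct_comm]
      have e1 := congrArg (fun w => (z - y) ⬝ᵥ w) hyX
      have e2 := congrArg (fun w => (z - y) ⬝ᵥ w) hz
      have e3 := hsym z y
      have e4 := dotProduct_comm z y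
      have e5 := dotProduct_comm z a
      have e6 := dotProduct_comm z b
      have e7 := dotProduct_comm y a
      have e8 := dotProduct_comm y b
      simp only [Matrix.sub_mulVec, Matrix.smul_mulVec, Matrix.one_mulVec, Matrix.mulVec_sub,
        dotProduct_sub, sub_dotProduct, dotProduct_smul, smul_eq_mul, dotProduct_zero] at e1 e2
      unfold objQ at hob hfy2
      rw [e5, e6, e7, e8] at e1
      rw [e3, e4] at e2
      rw [e3, e4] at e1
      rw [← hzΔ] at hfy2
      nlinarith
    obtain ⟨u, hu, hAu⟩ := lambdaMin_eig A hA
    have hker : ∀ u : Fin n → ℝ, A.mulVec u = m • u →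
        ∀ s : ℝ, (A - m • (1 : Matrix (Fin n) (Fin n) ℝ)).mulVec (y + s • u - y) = 0 := by
      intro u hu s
      rw [add_sub_cancel_left, Matrix.mulVec_smul, Matrix.sub_mulVec, Matrix.smul_mulVec,
        Matrix.one_mulVec, hu, sub_self, smul_zero]
    have hlspos : 0 < ls := by
      refine lt_of_le_of_ne hls fun h => ?_
      have : ∃ w : Fin n → ℝ, w ≠ 0 ∧ A.mulVec w = m • w ∧ b ⬝ᵥ w ≤ 0 := by
        rcases le_total (b ⬝ᵥ u) 0 with h1 | h1
        · exact ⟨u, hu, hAu, h1⟩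
        · exact ⟨-u, neg_ne_zero.2 hu, by rw [Matrix.mulVec_neg, hAu, smul_neg], by
            rw [dotProduct_neg]; linarith⟩
      obtain ⟨w, hw, hAw, hbw⟩ := this
      obtain ⟨s, hs, hsΔ⟩ := reach_sphere y w hw Δ hyΔ
      refine hzX _ (hker w hAw s) hsΔ ?_ (by rw [← h, zero_mul])
      rw [dotProduct_add, dotProduct_smul, smul_eq_mul]
      nlinarith
    have hby : b ⬝ᵥ y = c := by
      rcases mul_eq_zero.1 s2' with h | h <;> linarith
    have hbne : ∀ w : Fin n → ℝ, w ≠ 0 → A.mulVec w = m • w → b ⬝ᵥ w ≠ 0 := by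
      intro w hw hAw hbw
      obtain ⟨s, hs, hsΔ⟩ := reach_sphere y w hw Δ hyΔ
      have : b ⬝ᵥ (y + s • w) = c := by
        rw [dotProduct_add, dotProduct_smul, hbw, hby]; simp
      exact hzX _ (hker w hAw s) hsΔ this.le (by rw [this]; simp)
    have hkm : ∀ w : Fin n → ℝ, (A - m • (1 : Matrix (Fin n) (Fin n) ℝ)).mulVec w = 0 →
        A.mulVec w = m • w := by
      intro w hw
      rw [Matrix.sub_mulVec, Matrix.smul_mulVec, Matrix.one_mulVec] at hw
      exact sub_eq_zero.1 hw
    refine ⟨⟨hμeq, hmneg, hlspos⟩, ?_, ?_⟩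
    · unfold eigMult
      have hum : u ∈ LinearMap.ker (A - m • (1 : Matrix (Fin n) (Fin n) ℝ)).mulVecLin := by
        rw [LinearMap.mem_ker, Matrix.mulVecLin_apply, Matrix.sub_mulVec, Matrix.smul_mulVec,
          Matrix.one_mulVec, hAu, sub_self]
      refine finrank_eq_one (⟨u, hum⟩ : LinearMap.ker
        (A - m • (1 : Matrix (Fin n) (Fin n) ℝ)).mulVecLin) ?_ ?_
      · intro h; exact hu (congrArg Subtype.val h)
      · rintro ⟨w, hw⟩
        have hbu := hbne u hu hAu
        refine ⟨(b ⬝ᵥ w) / (b ⬝ᵥ u), ?_⟩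
        apply Subtype.ext
        show ((b ⬝ᵥ w) / (b ⬝ᵥ u)) • u = w
        have hw' : A.mulVec w = m • w := hkm w hw
        by_contra hne
        refine hbne (((b ⬝ᵥ w) / (b ⬝ᵥ u)) • u - w) (sub_ne_zero.2 hne) ?_ ?_
        · rw [Matrix.mulVec_sub, Matrix.mulVec_smul, hAu, hw', smul_sub, smul_comm]
        · rw [dotProduct_sub, dotProduct_smul, smul_eq_mul, div_mul_cancel₀ _ hbu, sub_self]
    · obtain ⟨s1, hs1, hs1Δ⟩ := reach_sphere y u hu Δ hyΔ
      obtain ⟨s2, hs2, hs2Δ⟩ := reach_sphere y (-u) (neg_ne_zero.2 hu) Δ hyΔ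
      have k1 := hker u hAu s1
      have k2 := hker (-u) (by rw [Matrix.mulVec_neg, hAu, smul_neg]) s2
      rw [Matrix.mulVec_sub, hyX] at k1 k2
      refine ⟨_, _, sub_eq_zero.1 k1, sub_eq_zero.1 k2, hs1Δ, hs2Δ, ?_⟩
      have hbu := hbne u hu hAu
      simp only [dotProduct_add, dotProduct_smul, dotProduct_neg, hby, smul_eq_mul]
      have : 0 < s1 * s2 * (b ⬝ᵥ u) ^ 2 := by positivity
      nlinarith
  · rintro ⟨⟨hμeq, hmneg, hlspos⟩, hmult, x1, x2, hx1, hx2, hn1, hn2, hprod⟩ heq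
    have hLo := hL xo
    unfold lagr at hLo
    have s1 : 0 ≤ (-μ) * (Δ - xo ⬝ᵥ xo) := mul_nonneg (by linarith) (by linarith)
    have s2 : 0 ≤ ls * (c - b ⬝ᵥ xo) := mul_nonneg hls (by linarith)
    have s1' : (-μ) * (Δ - xo ⬝ᵥ xo) = 0 := by linarith
    have s2' : ls * (c - b ⬝ᵥ xo) = 0 := by linarith
    have hxoΔ : xo ⬝ᵥ xo = Δ := by
      rcases mul_eq_zero.1 s1' with h | h <;> linarith
    have hxoc : b ⬝ᵥ xo = c := by
      rcases mul_eq_zero.1 s2' with h | h <;> linarith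
    have hX := hmin xo (by unfold lagr; linarith)
    rw [hμeq] at hX
    unfold eigMult at hmult
    rw [← hm] at hmult
    have hne12 : x2 - x1 ≠ 0 := by
      intro h
      rw [sub_eq_zero.1 h] at hprod
      nlinarith [mul_self_nonneg (b ⬝ᵥ x1 - c)]
    have m1 : x2 - x1 ∈ LinearMap.ker (A - m • (1 : Matrix (Fin n) (Fin n) ℝ)).mulVecLin := by
      rw [LinearMap.mem_ker, Matrix.mulVecLin_apply, Matrix.mulVec_sub, hx1, hx2, sub_self]
    have m2 : xo - x1 ∈ LinearMap.ker (A - m • (1 : Matrix (Fin n) (Fin n) ℝ)).mulVecLin := by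
      rw [LinearMap.mem_ker, Matrix.mulVecLin_apply, Matrix.mulVec_sub, hx1, hX, sub_self]
    obtain ⟨s, hs⟩ := (finrank_eq_one_iff_of_nonzero' (⟨x2 - x1, m1⟩ : LinearMap.ker
        (A - m • (1 : Matrix (Fin n) (Fin n) ℝ)).mulVecLin)
        (fun h => hne12 (congrArg Subtype.val h))).1 hmult ⟨xo - x1, m2⟩
    have hs' : s • (x2 - x1) = xo - x1 := congrArg Subtype.val hs
    have hxe : xo = x1 + s • (x2 - x1) := by rw [hs']; abel
    have hpos := dot_pos hne12
    have e := hxoΔ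
    rw [hxe] at e
    simp only [dotProduct_add, add_dotProduct, dotProduct_smul, smul_dotProduct, smul_eq_mul,
      dotProduct_sub, sub_dotProduct] at e hpos
    rw [dotProduct_comm x2 x1, hn1, hn2] at e hpos
    have e2 : s * (s - 1) * (2 * (Δ - x1 ⬝ᵥ x2)) = 0 := by linear_combination e
    have hfac : s * (s - 1) = 0 := by
      rcases mul_eq_zero.1 e2 with h | h
      · exact h
      · linarith
    rcases mul_eq_zero.1 hfac with h | h
    · rw [h, zero_smul, add_zero] at hxe
      rw [← hxe, hxoc] at hprod
      simp at hprod
    · have h1 : s = 1 := by linarith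
      rw [h1, one_smul, add_sub_cancel] at hxe
      rw [← hxe, hxoc] at hprod
      simp at hprod
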